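/- Let F denote the ħ-Fourier transform Fψ(p) = (2πħ)^(−n/2) ∫_{ℝⁿ} e^(−(i/ħ) p·x) ψ(x) dx. Then for every Schwartz symbol a : ℝ²ⁿ → ℂ, every Schwartz function ψ and every x ∈ ℝⁿ, F(A_BJψ)(x) = (B_BJ(Fψ))(x), where B_BJ is the Born–Jordan operator with symbol b(x,p) = a(−p, x) = (a ∘ J⁻¹)(x,p), J(x,p) = (p,−x) being the standard symplectic matrix. That is, Born–Jordan quantization is covariant under the metaplectic Fourier transform: F Op_BJ(a) F⁻¹ = Op_BJ(a ∘ J⁻¹). -/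

import Mathlib

open MeasureTheory Real Complex

noncomputable section

/-- Euclidean dot product on `ℝⁿ`. -/
def dotR {n : ℕ} (p y : Fin n → ℝ) : ℝ := ∑ i, p i * y i

/-- The `τ`-Wigner cross-distribution
`Wig_τ(ψ,φ)(x,p) = (2πhbar)^(−n) ∫ e^(−(i/hbar) p·y) ψ(x+τy) conj(φ(x−(1−τ)y)) dy`. -/
def WigTau (hbar : ℝ) {n : ℕ} (τ : ℝ) (ψ φ : (Fin n → ℝ) → ℂ) (x p : Fin n → ℝ) : ℂ :=
  ((((2 * π * hbar) ^ n : ℝ))⁻¹ : ℂ) *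
    ∫ y : Fin n → ℝ,
      Complex.exp (-(Complex.I / (hbar : ℂ)) * (dotR p y : ℝ)) *
        ψ (x + τ • y) * (starRingEnd ℂ) (φ (x - (1 - τ) • y))

/-- The Born–Jordan–Wigner cross-distribution: the average of the
`τ`-Wigner distributions over `τ ∈ [0,1]`. -/
def WigBJ (hbar : ℝ) {n : ℕ} (ψ φ : (Fin n → ℝ) → ℂ) (x p : Fin n → ℝ) : ℂ :=
  ∫ τ in (0:ℝ)..1, WigTau hbar τ ψ φ x p

/-- The `hbar`-Fourier transform `Fψ(p) = (2πhbar)^(−n/2) ∫ e^(−(i/hbar) p·x) ψ(x) dx`. -/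
def FourierHbar (hbar : ℝ) {n : ℕ} (ψ : (Fin n → ℝ) → ℂ) (p : Fin n → ℝ) : ℂ :=
  ((Real.sqrt ((2 * π * hbar) ^ n))⁻¹ : ℂ) *
    ∫ x : Fin n → ℝ, Complex.exp (-(Complex.I / (hbar : ℂ)) * (dotR p x : ℝ)) * ψ x

/-- The Shubin `τ`-operator
`A_τψ(x) = (2πhbar)^(−n) ∫∫ e^((i/hbar) p·(x−y)) a(τx+(1−τ)y, p) ψ(y) dp dy`,
the inner integral being over `p`. -/
def ShubinOp (hbar : ℝ) {n : ℕ} (τ : ℝ) (a : ((Fin n → ℝ) × (Fin n → ℝ)) → ℂ)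
    (ψ : (Fin n → ℝ) → ℂ) (x : Fin n → ℝ) : ℂ :=
  ((((2 * π * hbar) ^ n : ℝ))⁻¹ : ℂ) *
    ∫ y : Fin n → ℝ,
      (∫ p : Fin n → ℝ,
          Complex.exp ((Complex.I / (hbar : ℂ)) * (dotR p (x - y) : ℝ)) *
            a (τ • x + (1 - τ) • y, p)) * ψ y

/-- The Born–Jordan operator: the average of the Shubin `τ`-operators
over `τ ∈ [0,1]`. -/
def BJOp (hbar : ℝ) {n : ℕ} (a : ((Fin n → ℝ) × (Fin n → ℝ)) → ℂ)
    (ψ : (Fin n → ℝ) → ℂ) (x : Fin n → ℝ) : ℂ :=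
  ∫ τ in (0:ℝ)..1, ShubinOp hbar τ a ψ x

/-- `Θ(x,p) = sin(p·x/2hbar)/(p·x/2hbar)` (with value `1` when `p·x = 0`). -/
def Theta (hbar : ℝ) {n : ℕ} (x p : Fin n → ℝ) : ℝ :=
  if dotR p x = 0 then 1
  else Real.sin (dotR p x / (2 * hbar)) / (dotR p x / (2 * hbar))

/-- The modified Heisenberg–Weyl operator
`T̂_τ(z₀)ψ(x) = e^((i/hbar)(p₀·x − (1−τ)p₀·x₀)) ψ(x−x₀)`. -/
def THW (hbar : ℝ) {n : ℕ} (τ : ℝ) (z₀ : (Fin n → ℝ) × (Fin n → ℝ))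
    (ψ : (Fin n → ℝ) → ℂ) (x : Fin n → ℝ) : ℂ :=
  Complex.exp ((Complex.I / (hbar : ℂ)) *
      ((dotR z₀.2 x - (1 - τ) * dotR z₀.2 z₀.1 : ℝ) : ℂ)) * ψ (x - z₀.1)

/-- The symplectic Fourier transform
`F_σ a(z) = (2πhbar)^(−n) ∫ e^(−(i/hbar)σ(z,z′)) a(z′) dz′`,
`σ((x,p),(x′,p′)) = p·x′ − p′·x`. -/
def symplFT (hbar : ℝ) {n : ℕ} (a : ((Fin n → ℝ) × (Fin n → ℝ)) → ℂ)
    (z : (Fin n → ℝ) × (Fin n → ℝ)) : ℂ :=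
  ((((2 * π * hbar) ^ n : ℝ))⁻¹ : ℂ) *
    ∫ z' : (Fin n → ℝ) × (Fin n → ℝ),
      Complex.exp (-(Complex.I / (hbar : ℂ)) *
        ((dotR z.2 z'.1 - dotR z'.2 z.1 : ℝ) : ℂ)) * a z'

/-- The cross-ambiguity function
`Amb(ψ,φ)(x,p) = (2πhbar)^(−n) ∫ e^(−(i/hbar) p·x′) ψ(x′+x/2) conj(φ(x′−x/2)) dx′`. -/
def Amb (hbar : ℝ) {n : ℕ} (ψ φ : (Fin n → ℝ) → ℂ) (x p : Fin n → ℝ) : ℂ :=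
  ((((2 * π * hbar) ^ n : ℝ))⁻¹ : ℂ) *
    ∫ x' : Fin n → ℝ,
      Complex.exp (-(Complex.I / (hbar : ℂ)) * (dotR p x' : ℝ)) *
        ψ (x' + (1 / 2 : ℝ) • x) * (starRingEnd ℂ) (φ (x' - (1 / 2 : ℝ) • x))


/-! ### Helper notation -/

/-- The character `e^{(i/h) t}`. -/
def ee (h t : ℝ) : ℂ := Complex.exp ((Complex.I / (h : ℂ)) * (t : ℂ))

lemma ee_neg (h t : ℝ) : Complex.exp (-(Complex.I / (h : ℂ)) * (t : ℂ)) = ee h (-t) := by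
  unfold ee; congr 1; push_cast; ring

lemma ee_add (h s t : ℝ) : ee h (s + t) = ee h s * ee h t := by
  unfold ee; rw [← Complex.exp_add]; congr 1; push_cast; ring

lemma ee_norm (h t : ℝ) : ‖ee h t‖ = 1 := by
  unfold ee
  have : (Complex.I / (h : ℂ)) * (t : ℂ) = ((t / h : ℝ) : ℂ) * Complex.I := by
    push_cast; ring
  rw [this, Complex.norm_exp_ofReal_mul_I]

@[fun_prop]
lemma ee_continuous (h : ℝ) : Continuous (ee h) := by
  unfold ee; fun_prop

@[fun_prop]
lemma dotR_continuous {n : ℕ} {X : Type*} [TopologicalSpace X] {f g : X → (Fin n → ℝ)}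
    (hf : Continuous f) (hg : Continuous g) : Continuous (fun x => dotR (f x) (g x)) := by
  unfold dotR; fun_prop

lemma dotR_comm {n : ℕ} (p y : Fin n → ℝ) : dotR p y = dotR y p := by
  simp [dotR, mul_comm]
lemma dotR_add_right {n : ℕ} (p y z : Fin n → ℝ) : dotR p (y + z) = dotR p y + dotR p z := by
  simp [dotR, mul_add, Finset.sum_add_distrib]
lemma dotR_neg_right {n : ℕ} (p y : Fin n → ℝ) : dotR p (-y) = - dotR p y := by
  simp [dotR]
lemma dotR_sub_right {n : ℕ} (p y z : Fin n → ℝ) : dotR p (y - z) = dotR p y - dotR p z := by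
  simp [dotR, mul_sub]
lemma dotR_smul_right {n : ℕ} (p : Fin n → ℝ) (c : ℝ) (y : Fin n → ℝ) :
    dotR p (c • y) = c * dotR p y := by
  simp [dotR, Finset.mul_sum, mul_left_comm]
lemma dotR_add_left {n : ℕ} (p y z : Fin n → ℝ) : dotR (y + z) p = dotR y p + dotR z p := by
  simp [dotR, add_mul, Finset.sum_add_distrib]
lemma dotR_neg_left {n : ℕ} (p y : Fin n → ℝ) : dotR (-y) p = - dotR y p := by
  simp [dotR]
lemma dotR_sub_left {n : ℕ} (p y z : Fin n → ℝ) : dotR (y - z) p = dotR y p - dotR z p := by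
  simp [dotR, sub_mul]
lemma dotR_smul_left {n : ℕ} (p : Fin n → ℝ) (c : ℝ) (y : Fin n → ℝ) :
    dotR (c • y) p = c * dotR y p := by
  simp [dotR, Finset.mul_sum, mul_assoc]

/-- Integrable weight. -/
def wt {n : ℕ} (x : Fin n → ℝ) : ℝ := ((1 + ‖x‖) ^ (n + 1))⁻¹

lemma wt_pos {n : ℕ} (x : Fin n → ℝ) : 0 < wt x := by unfold wt; positivity

lemma wt_le_one {n : ℕ} (x : Fin n → ℝ) : wt x ≤ 1 := by
  unfold wt
  exact inv_le_one_of_one_le₀ (one_le_pow₀ (by linarith [norm_nonneg x]))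

lemma wt_neg {n : ℕ} (x : Fin n → ℝ) : wt (-x) = wt x := by simp [wt]

@[fun_prop]
lemma wt_continuous {n : ℕ} : Continuous (wt : (Fin n → ℝ) → ℝ) := by
  unfold wt
  exact Continuous.inv₀ (by fun_prop) (fun x => by positivity)

lemma wt_integrable {n : ℕ} : Integrable (wt : (Fin n → ℝ) → ℝ) := by
  have := integrable_one_add_norm (E := Fin n → ℝ) (μ := volume) (r := ((n + 1 : ℕ) : ℝ))
    (by simp)
  refine this.congr (Filter.Eventually.of_forall fun x => ?_)
  simp only [wt]
  rw [Real.rpow_neg (by positivity), Real.rpow_natCast]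

lemma ee_mul_integrable {n : ℕ} (h : ℝ) {f : (Fin n → ℝ) → ℂ} {g : (Fin n → ℝ) → ℝ}
    (hf : Integrable f) (hg : Continuous g) : Integrable (fun x => ee h (g x) * f x) := by
  refine (hf.norm).mono' ?_ (Filter.Eventually.of_forall fun x => ?_)
  · exact (Continuous.aestronglyMeasurable (by fun_prop)).mul hf.aestronglyMeasurable
  · simp [ee_norm]

/-- Fourier inversion in the normalisation used here. -/
lemma inversion {n : ℕ} (h : ℝ) (hh : 0 < h) (f : (Fin n → ℝ) → ℂ) (hc : Continuous f)
    (hf : Integrable f)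
    (hF : Integrable (fun η : Fin n → ℝ => ∫ x, ee h (-(dotR η x)) * f x)) (y : Fin n → ℝ) :
    ∫ η : Fin n → ℝ, ee h (dotR η y) * ∫ x, ee h (-(dotR η x)) * f x
      = (((2 * π * h) ^ n : ℝ) : ℂ) * f y := by
  set F : (Fin n → ℝ) → ℂ := fun η => ∫ x, ee h (-(dotR η x)) * f x with hFdef
  have hR : 0 < 2 * π * h := by positivity
  let g : EuclideanSpace ℝ (Fin n) → ℂ := fun v => f (WithLp.ofLp v)
  have mp : MeasurePreserving (fun v : EuclideanSpace ℝ (Fin n) => WithLp.ofLp v) := PiLp.volume_preserving_ofLp (Fin n)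
  have me : MeasurableEmbedding (fun v : EuclideanSpace ℝ (Fin n) => WithLp.ofLp v) :=
    (MeasurableEquiv.toLp 2 (Fin n → ℝ)).symm.measurableEmbedding
  have hin : ∀ v w : EuclideanSpace ℝ (Fin n), inner ℝ v w = dotR (WithLp.ofLp v) (WithLp.ofLp w) := by
    intro v w
    simp [PiLp.inner_apply, dotR, mul_comm]
  have hgi : Integrable g := mp.integrable_comp_of_integrable hf
  have hgc : Continuous g := hc.comp (PiLp.continuous_ofLp 2 _)
  have hFg : FourierTransform.fourier g = fun ξ : EuclideanSpace ℝ (Fin n) => F ((2 * π * h) • WithLp.ofLp ξ) := by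
    ext ξ
    rw [Real.fourier_eq']
    simp only [hFdef, g]
    rw [← mp.integral_comp me]
    congr 1; ext v
    rw [smul_eq_mul]
    congr 1
    rw [hin, dotR_smul_left, dotR_comm]
    unfold ee
    congr 1
    have : (h : ℂ) ≠ 0 := by exact_mod_cast hh.ne'
    push_cast
    field_simp
  have hFi : Integrable (FourierTransform.fourier g) := by
    rw [hFg]
    exact mp.integrable_comp_of_integrable
      (g := fun η => F ((2 * π * h) • η)) (hF.comp_smul hR.ne')
  have key := congrFun (hgc.fourierInv_fourier_eq hgi hFi) (WithLp.toLp 2 y)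
  rw [Real.fourierInv_eq', hFg] at key
  have e2 : ∀ v : EuclideanSpace ℝ (Fin n), Complex.exp ((((2 * π * inner ℝ v (WithLp.toLp 2 y : EuclideanSpace ℝ (Fin n)) : ℝ) : ℂ) * Complex.I)) •
      F ((2 * π * h) • WithLp.ofLp v) =
      (fun η => ee h (dotR ((2 * π * h) • η) y) * F ((2 * π * h) • η)) (WithLp.ofLp v) := by
    intro v
    simp only [smul_eq_mul]
    congr 1
    rw [hin, dotR_smul_left]
    unfold ee
    congr 1
    have : (h : ℂ) ≠ 0 := by exact_mod_cast hh.ne'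
    push_cast
    field_simp
  simp_rw [e2] at key
  rw [mp.integral_comp me (fun η => ee h (dotR ((2 * π * h) • η) y) * F ((2 * π * h) • η)),
    Measure.integral_comp_smul volume (fun η => ee h (dotR η y) * F η)] at key
  simp only [g] at key
  rw [← key]
  simp only [Module.finrank_fin_fun, Complex.real_smul]
  rw [abs_of_pos (by positivity), ← mul_assoc, ← Complex.ofReal_mul,
    mul_inv_cancel₀ (by positivity)]
  simp [hFdef]

open scoped LineDeriv in
/-- directional derivative in the first group of variables -/
def dS {n : ℕ} (i : Fin n) (a : SchwartzMap ((Fin n → ℝ) × (Fin n → ℝ)) ℂ) :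
    SchwartzMap ((Fin n → ℝ) × (Fin n → ℝ)) ℂ :=
  ∂_{((Pi.single i 1, 0) : (Fin n → ℝ) × (Fin n → ℝ))} a

lemma dS_apply {n : ℕ} (i : Fin n) (a : SchwartzMap ((Fin n → ℝ) × (Fin n → ℝ)) ℂ)
    (z : (Fin n → ℝ) × (Fin n → ℝ)) : dS i a z = fderiv ℝ a z (Pi.single i 1, 0) := rfl

/-- Partial Fourier transform in the first group of variables. -/
def PF (h : ℝ) {n : ℕ} (a : SchwartzMap ((Fin n → ℝ) × (Fin n → ℝ)) ℂ) (w q : Fin n → ℝ) : ℂ :=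
  ∫ u : Fin n → ℝ, ee h (-(dotR w u)) * a (u, q)

lemma schwartz_bound {n : ℕ} (a : SchwartzMap ((Fin n → ℝ) × (Fin n → ℝ)) ℂ) :
    ∃ C : ℝ, 0 ≤ C ∧ ∀ u q, ‖a (u, q)‖ ≤ C * (wt u * wt q) := by
  refine ⟨2 ^ (2 * (n + 1)) * (Finset.Iic (2 * (n + 1), 0)).sup
    (fun m => SchwartzMap.seminorm ℝ m.1 m.2) a, by positivity, fun u q => ?_⟩
  have h1 := SchwartzMap.one_add_le_sup_seminorm_apply (𝕜 := ℝ) (m := (2 * (n + 1), 0))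
    (le_refl _) (le_refl _) a (u, q)
  simp only [norm_iteratedFDeriv_zero] at h1
  refine le_trans ?_ (mul_le_mul_of_nonneg_right h1 (mul_pos (wt_pos u) (wt_pos q)).le)
  have h2 : (1 + ‖u‖) ^ (n + 1) * (1 + ‖q‖) ^ (n + 1) ≤ (1 + ‖(u, q)‖) ^ (2 * (n + 1)) := by
    rw [two_mul, pow_add (1 + ‖(u, q)‖) (n + 1) (n + 1)]
    gcongr
    · exact norm_fst_le (u, q)
    · exact norm_snd_le (u, q)
  have h3 : (1 + ‖u‖) ^ (n + 1) * (1 + ‖q‖) ^ (n + 1) * (wt u * wt q) = 1 := by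
    unfold wt; field_simp
  calc ‖a (u, q)‖ = ((1 + ‖u‖) ^ (n + 1) * (1 + ‖q‖) ^ (n + 1) * (wt u * wt q)) * ‖a (u, q)‖ := by
        rw [h3, one_mul]
    _ = (1 + ‖u‖) ^ (n + 1) * (1 + ‖q‖) ^ (n + 1) * (‖a (u, q)‖ * (wt u * wt q)) := by ring
    _ ≤ (1 + ‖(u, q)‖) ^ (2 * (n + 1)) * (‖a (u, q)‖ * (wt u * wt q)) := by
        have := (wt_pos u).le
        have := (wt_pos q).le
        gcongr
    _ = _ := by ring

lemma slice_integrable {n : ℕ} (a : SchwartzMap ((Fin n → ℝ) × (Fin n → ℝ)) ℂ)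
    (q : Fin n → ℝ) : Integrable (fun u => a (u, q)) := by
  obtain ⟨C, hC, hb⟩ := schwartz_bound a
  refine (wt_integrable.const_mul (C * wt q)).mono'
    (Continuous.aestronglyMeasurable (by fun_prop)) (Filter.Eventually.of_forall fun u => ?_)
  refine (hb u q).trans (le_of_eq (by ring))

lemma PF_bound0 {n : ℕ} (h : ℝ) (a : SchwartzMap ((Fin n → ℝ) × (Fin n → ℝ)) ℂ) :
    ∃ C : ℝ, 0 ≤ C ∧ ∀ w q, ‖PF h a w q‖ ≤ C * wt q := by
  obtain ⟨C, hC, hb⟩ := schwartz_bound a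
  refine ⟨C * ∫ u : Fin n → ℝ, wt u, mul_nonneg hC (integral_nonneg fun u => (wt_pos u).le),
    fun w q => ?_⟩
  unfold PF
  refine (norm_integral_le_of_norm_le (wt_integrable.const_mul (C * wt q))
    (Filter.Eventually.of_forall fun u => ?_)).trans (le_of_eq ?_)
  · rw [norm_mul, ee_norm, one_mul]
    refine (hb u q).trans (le_of_eq (by ring))
  · rw [integral_const_mul]; ring

lemma PF_ibp {n : ℕ} (h : ℝ) (hh : 0 < h) (i : Fin n)
    (a : SchwartzMap ((Fin n → ℝ) × (Fin n → ℝ)) ℂ) (w q : Fin n → ℝ) :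
    |w i| * ‖PF h a w q‖ = h * ‖PF h (dS i a) w q‖ := by
  have hlin : ∀ u, HasFDerivAt (fun u : Fin n → ℝ => dotR w u)
      (∑ j, w j • (ContinuousLinearMap.proj j : (Fin n → ℝ) →L[ℝ] ℝ)) u := by
    intro u
    have := (∑ j, w j • (ContinuousLinearMap.proj j : (Fin n → ℝ) →L[ℝ] ℝ)).hasFDerivAt (x := u)
    convert this using 1
    ext u
    simp [dotR]
  have hee : ∀ t : ℝ, HasDerivAt (ee h) ((Complex.I / (h : ℂ)) * ee h t) t := by
    intro t
    unfold ee
    have h1 : HasDerivAt (fun t : ℝ => (Complex.I / (h : ℂ)) * (t : ℂ)) (Complex.I / (h : ℂ)) t := by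
      simpa using (Complex.ofRealCLM.hasDerivAt (x := t)).const_mul (Complex.I / (h : ℂ))
    simpa [mul_comm] using h1.cexp
  have hf : ∀ u, HasFDerivAt (fun u : Fin n → ℝ => ee h (-(dotR w u)))
      ((Complex.I / (h : ℂ) * ee h (-(dotR w u))) •
        Complex.ofRealCLM.comp (-(∑ j, w j • (ContinuousLinearMap.proj j : (Fin n → ℝ) →L[ℝ] ℝ)))) u := by
    intro u
    have := (hee (-(dotR w u))).hasFDerivAt.comp u (hlin u).fun_neg
    refine this.congr_fderiv ?_
    ext v
    simp
    ring_nf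
    rw [Finset.mul_sum]
    exact Finset.sum_congr rfl fun j _ => by ring
  have hg : ∀ u, HasFDerivAt (fun u : Fin n → ℝ => a (u, q)) _ u := fun u =>
    (a.differentiableAt (x := (u, q))).hasFDerivAt.comp u (hasFDerivAt_prodMk_left u q)
  have hfv : ∀ u, fderiv ℝ (fun u : Fin n → ℝ => ee h (-(dotR w u))) u (Pi.single i 1)
      = -(Complex.I / (h : ℂ) * w i) * ee h (-(dotR w u)) := by
    intro u
    rw [(hf u).fderiv]
    simp [Pi.single_apply]
    ring
  have hgv : ∀ u, fderiv ℝ (fun u : Fin n → ℝ => a (u, q)) u (Pi.single i 1) = dS i a (u, q) := by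
    intro u
    rw [(hg u).fderiv, dS_apply]
    simp
  have ibp := integral_mul_fderiv_eq_neg_fderiv_mul_of_integrable (𝕜 := ℂ) (μ := volume)
    (f := fun u : Fin n → ℝ => ee h (-(dotR w u))) (g := fun u : Fin n → ℝ => a (u, q))
    (v := Pi.single i 1) ?_ ?_ ?_ (fun u _ => (hf u).differentiableAt)
    (fun u _ => (hg u).differentiableAt)
  · simp_rw [hfv, hgv, mul_assoc] at ibp
    rw [integral_const_mul] at ibp
    have ibp' : PF h (dS i a) w q = (Complex.I / (h : ℂ) * w i) * PF h a w q := by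
      unfold PF; rw [ibp]; ring
    rw [ibp', norm_mul, norm_mul, norm_div, Complex.norm_I, Complex.norm_real, Complex.norm_real,
      Real.norm_of_nonneg hh.le, Real.norm_eq_abs]
    field_simp
  · simp_rw [hfv, mul_assoc]
    exact (ee_mul_integrable h (slice_integrable a q) (by fun_prop)).const_mul _
  · simp_rw [hgv]
    exact ee_mul_integrable h (slice_integrable (dS i a) q) (by fun_prop)
  · exact ee_mul_integrable h (slice_integrable a q) (by fun_prop)

lemma PF_bound_k {n : ℕ} (h : ℝ) (hh : 0 < h) (i : Fin n) (k : ℕ) :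
    ∀ a : SchwartzMap ((Fin n → ℝ) × (Fin n → ℝ)) ℂ,
    ∃ C : ℝ, 0 ≤ C ∧ ∀ w q, |w i| ^ k * ‖PF h a w q‖ ≤ C * wt q := by
  induction k with
  | zero => intro a; simpa using PF_bound0 h a
  | succ k ih =>
    intro a
    obtain ⟨C, hC, hb⟩ := ih (dS i a)
    refine ⟨h * C, by positivity, fun w q => ?_⟩
    rw [pow_succ, mul_assoc, PF_ibp h hh]
    calc _ = h * (|w i| ^ k * ‖PF h (dS i a) w q‖) := by ring
      _ ≤ h * (C * wt q) := mul_le_mul_of_nonneg_left (hb w q) hh.le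
      _ = _ := by ring

lemma PF_bound {n : ℕ} (h : ℝ) (hh : 0 < h) (hn : 1 ≤ n)
    (a : SchwartzMap ((Fin n → ℝ) × (Fin n → ℝ)) ℂ) :
    ∃ C : ℝ, 0 ≤ C ∧ ∀ w q, ‖PF h a w q‖ ≤ C * (wt w * wt q) := by
  obtain ⟨C0, hC0, hb0⟩ := PF_bound0 h a
  choose C hC hb using fun i => PF_bound_k h hh i (n + 1) a
  refine ⟨2 ^ (n + 1) * (C0 + ∑ i, C i), ?_, fun w q => ?_⟩
  · have := Finset.sum_nonneg (fun i (_ : i ∈ Finset.univ) => hC i)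
    positivity
  have hS := Finset.sum_nonneg (fun i (_ : i ∈ Finset.univ) => hC i)
  have hq := wt_pos q
  have main : (1 + ‖w‖) ^ (n + 1) * ‖PF h a w q‖ ≤ 2 ^ (n + 1) * ((C0 + ∑ i, C i) * wt q) := by
    by_cases hw : ‖w‖ ≤ 1
    · have : (1 + ‖w‖) ^ (n + 1) ≤ 2 ^ (n + 1) := by gcongr; linarith
      refine mul_le_mul this ((hb0 w q).trans ?_) (norm_nonneg _) (by positivity)
      gcongr; linarith
    · push Not at hw
      have : Nonempty (Fin n) := ⟨⟨0, hn⟩⟩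
      obtain ⟨i, hi⟩ := Finite.exists_max (fun i => ‖w i‖)
      have hwi : ‖w‖ ≤ |w i| := (pi_norm_le_iff_of_nonempty _).2 hi
      have : (1 + ‖w‖) ^ (n + 1) ≤ 2 ^ (n + 1) * |w i| ^ (n + 1) := by
        rw [← mul_pow]; gcongr; linarith
      calc _ ≤ 2 ^ (n + 1) * |w i| ^ (n + 1) * ‖PF h a w q‖ := by gcongr
        _ = 2 ^ (n + 1) * (|w i| ^ (n + 1) * ‖PF h a w q‖) := by ring
        _ ≤ 2 ^ (n + 1) * (C i * wt q) := mul_le_mul_of_nonneg_left (hb i w q) (by positivity)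
        _ ≤ _ := by
          have := Finset.single_le_sum (fun i (_ : i ∈ Finset.univ) => hC i) (Finset.mem_univ i)
          gcongr; linarith
  have hp : 0 < (1 + ‖w‖) ^ (n + 1) := by positivity
  have := (le_div_iff₀' hp).2 main
  refine this.trans (le_of_eq ?_)
  unfold wt; field_simp

lemma PF_continuous {n : ℕ} (h : ℝ) (a : SchwartzMap ((Fin n → ℝ) × (Fin n → ℝ)) ℂ) :
    Continuous (fun z : (Fin n → ℝ) × (Fin n → ℝ) => PF h a z.1 z.2) := by
  obtain ⟨C, hC, hb⟩ := schwartz_bound a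
  unfold PF
  refine continuous_of_dominated (bound := fun u => C * wt u) (fun z => ?_) (fun z => ?_)
    (wt_integrable.const_mul C) (Filter.Eventually.of_forall fun u => ?_)
  · exact Continuous.aestronglyMeasurable (by fun_prop)
  · refine Filter.Eventually.of_forall fun u => ?_
    rw [norm_mul, ee_norm, one_mul]
    refine (hb u z.2).trans ?_
    have := wt_le_one z.2
    have := wt_pos u
    gcongr
    nlinarith
  · fun_prop

/-- Partial (inverse) Fourier transform in the second group of variables. -/
def KK (h : ℝ) {n : ℕ} (a : SchwartzMap ((Fin n → ℝ) × (Fin n → ℝ)) ℂ) (u v : Fin n → ℝ) : ℂ :=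
  ∫ p : Fin n → ℝ, ee h (dotR p v) * a (u, p)

/-- swapped symbol -/
def swapS {n : ℕ} (a : SchwartzMap ((Fin n → ℝ) × (Fin n → ℝ)) ℂ) :
    SchwartzMap ((Fin n → ℝ) × (Fin n → ℝ)) ℂ :=
  SchwartzMap.compCLMOfContinuousLinearEquiv ℝ
    (ContinuousLinearEquiv.prodComm ℝ (Fin n → ℝ) (Fin n → ℝ)) a

lemma swapS_apply {n : ℕ} (a : SchwartzMap ((Fin n → ℝ) × (Fin n → ℝ)) ℂ) (u v : Fin n → ℝ) :
    swapS a (u, v) = a (v, u) := rfl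

lemma KK_eq {n : ℕ} (h : ℝ) (a : SchwartzMap ((Fin n → ℝ) × (Fin n → ℝ)) ℂ) (u v : Fin n → ℝ) :
    KK h a u v = PF h (swapS a) (-v) u := by
  unfold KK PF
  congr 1; ext p
  rw [swapS_apply, dotR_neg_left, neg_neg, dotR_comm]

lemma KK_bound {n : ℕ} (h : ℝ) (hh : 0 < h) (hn : 1 ≤ n)
    (a : SchwartzMap ((Fin n → ℝ) × (Fin n → ℝ)) ℂ) :
    ∃ C : ℝ, 0 ≤ C ∧ ∀ u v, ‖KK h a u v‖ ≤ C * wt v := by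
  obtain ⟨C, hC, hb⟩ := PF_bound h hh hn (swapS a)
  refine ⟨C, hC, fun u v => ?_⟩
  rw [KK_eq]
  refine (hb _ _).trans ?_
  rw [wt_neg]
  have := wt_pos v
  have := wt_le_one u
  gcongr
  nlinarith

lemma KK_continuous {n : ℕ} (h : ℝ) (a : SchwartzMap ((Fin n → ℝ) × (Fin n → ℝ)) ℂ) :
    Continuous (fun z : (Fin n → ℝ) × (Fin n → ℝ) => KK h a z.1 z.2) := by
  simp_rw [KK_eq]
  exact (PF_continuous h (swapS a)).comp
    (f := fun z : (Fin n → ℝ) × (Fin n → ℝ) => (-z.2, z.1)) (by fun_prop)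

@[fun_prop]
lemma PF_cont {n : ℕ} (h : ℝ) (a : SchwartzMap ((Fin n → ℝ) × (Fin n → ℝ)) ℂ)
    {X : Type*} [TopologicalSpace X] {f g : X → (Fin n → ℝ)}
    (hf : Continuous f) (hg : Continuous g) : Continuous (fun x => PF h a (f x) (g x)) :=
  Continuous.comp (g := fun z : (Fin n → ℝ) × (Fin n → ℝ) => PF h a z.1 z.2)
    (f := fun x => (f x, g x)) (PF_continuous h a) (hf.prodMk hg)

@[fun_prop]
lemma KK_cont {n : ℕ} (h : ℝ) (a : SchwartzMap ((Fin n → ℝ) × (Fin n → ℝ)) ℂ)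
    {X : Type*} [TopologicalSpace X] {f g : X → (Fin n → ℝ)}
    (hf : Continuous f) (hg : Continuous g) : Continuous (fun x => KK h a (f x) (g x)) :=
  Continuous.comp (g := fun z : (Fin n → ℝ) × (Fin n → ℝ) => KK h a z.1 z.2)
    (f := fun x => (f x, g x)) (KK_continuous h a) (hf.prodMk hg)

lemma shear_wt_integrable {n : ℕ} (s : ℝ) :
    Integrable (fun z : (Fin n → ℝ) × (Fin n → ℝ) => wt z.1 * wt (z.2 - s • z.1)) := by
  rw [Measure.volume_eq_prod, integrable_prod_iff (Continuous.aestronglyMeasurable (by fun_prop))]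
  refine ⟨Filter.Eventually.of_forall fun w => ?_, ?_⟩
  · exact (wt_integrable.comp_sub_right (s • w)).const_mul (wt w)
  · have : ∀ w : Fin n → ℝ, ∫ q : Fin n → ℝ, ‖wt w * wt (q - s • w)‖
        = wt w * ∫ q : Fin n → ℝ, wt q := by
      intro w
      rw [← integral_sub_right_eq_self (fun q : Fin n → ℝ => wt q) (s • w), ← integral_const_mul]
      congr 1; ext q
      exact Real.norm_of_nonneg (mul_pos (wt_pos _) (wt_pos _)).le
    simp_rw [this]
    exact wt_integrable.mul_const _

lemma shear_integrable {n : ℕ} (s C : ℝ) (F : (Fin n → ℝ) × (Fin n → ℝ) → ℂ)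
    (hF : Continuous F) (hb : ∀ w q, ‖F (w, q)‖ ≤ C * (wt w * wt (q - s • w))) :
    Integrable F (volume.prod volume) :=
  ((shear_wt_integrable s).const_mul C).mono' hF.aestronglyMeasurable
    (Filter.Eventually.of_forall fun z => hb z.1 z.2)

lemma key {n : ℕ} (h : ℝ) (hh : 0 < h) (hn : 1 ≤ n)
    (a : SchwartzMap ((Fin n → ℝ) × (Fin n → ℝ)) ℂ) (s : ℝ) (y ξ : Fin n → ℝ) :
    ∫ v : Fin n → ℝ, ee h (-(dotR ξ v)) * KK h a (y + s • v) v
      = ∫ w : Fin n → ℝ, ee h (dotR w y) * PF h a w (ξ - s • w) := by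
  have hD : (((2 * π * h) ^ n : ℝ) : ℂ) ≠ 0 := by
    have : 0 < (2 * π * h) ^ n := by positivity
    exact_mod_cast this.ne'
  set D : ℂ := (((2 * π * h) ^ n : ℝ) : ℂ) with hDdef
  obtain ⟨C, hC, hb⟩ := PF_bound h hh hn a
  obtain ⟨C', hC', hb'⟩ := KK_bound h hh hn a
  -- partial inversion
  have inv1 : ∀ u p : Fin n → ℝ, ∫ w : Fin n → ℝ, ee h (dotR w u) * PF h a w p = D * a (u, p) := by
    intro u p
    refine inversion h hh (fun u => a (u, p)) (by fun_prop) (slice_integrable a p) ?_ u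
    refine (wt_integrable.const_mul (C * wt p)).mono'
      (Continuous.aestronglyMeasurable (f := fun w => PF h a w p) (by fun_prop))
      (Filter.Eventually.of_forall fun w => ?_)
    exact (hb w p).trans (le_of_eq (by ring))
  set G : (Fin n → ℝ) → ℂ := fun q => ∫ w : Fin n → ℝ, ee h (dotR w y) * PF h a w (q - s • w)
    with hG
  have hGc : Continuous G := by
    refine continuous_of_dominated (bound := fun w => C * wt w) (fun q => ?_) (fun q => ?_)
      (wt_integrable.const_mul C) (Filter.Eventually.of_forall fun w => ?_)
    · exact Continuous.aestronglyMeasurable (by fun_prop)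
    · refine Filter.Eventually.of_forall fun w => ?_
      rw [norm_mul, ee_norm, one_mul]
      refine (hb w _).trans ?_
      have := wt_le_one (q - s • w)
      have := wt_pos w
      gcongr
      nlinarith
    · fun_prop
  have hJ : ∀ v : Fin n → ℝ, Integrable (fun z : (Fin n → ℝ) × (Fin n → ℝ) =>
      ee h (-(dotR v z.2)) * (ee h (dotR z.1 y) * PF h a z.1 (z.2 - s • z.1)))
      (volume.prod volume) := by
    intro v
    refine shear_integrable s C _ (by fun_prop) (fun w q => ?_)
    rw [norm_mul, norm_mul, ee_norm, ee_norm, one_mul, one_mul]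
    exact hb _ _
  have hGi : Integrable G := by
    have := (hJ 0).integral_prod_right
    simpa [hG, dotR, ee] using this
  have hGF : ∀ v : Fin n → ℝ, ∫ q, ee h (-(dotR v q)) * G q = D * KK h a (y - s • v) (-v) := by
    intro v
    have e1 : ∀ q, ee h (-(dotR v q)) * G q = ∫ w : Fin n → ℝ,
        ee h (-(dotR v q)) * (ee h (dotR w y) * PF h a w (q - s • w)) := by
      intro q; rw [integral_const_mul]
    simp_rw [e1]
    rw [integral_integral_swap (f := fun q w =>
      ee h (-(dotR v q)) * (ee h (dotR w y) * PF h a w (q - s • w))) (hJ v).swap]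
    have e2 : ∀ w : Fin n → ℝ, ∫ q : Fin n → ℝ,
        ee h (-(dotR v q)) * (ee h (dotR w y) * PF h a w (q - s • w))
        = ∫ p : Fin n → ℝ, ee h (-(dotR v p)) * (ee h (dotR w (y - s • v)) * PF h a w p) := by
      intro w
      rw [← integral_sub_right_eq_self (fun p : Fin n → ℝ =>
        ee h (-(dotR v p)) * (ee h (dotR w (y - s • v)) * PF h a w p)) (s • w)]
      congr 1; ext q
      rw [← mul_assoc, ← mul_assoc, ← ee_add, ← ee_add]
      congr 2
      rw [dotR_sub_right, dotR_sub_right, dotR_smul_right, dotR_smul_right, dotR_comm w v]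
      ring
    simp_rw [e2]
    rw [integral_integral_swap]
    · unfold KK
      rw [← integral_const_mul]
      congr 1; ext p
      rw [integral_const_mul, inv1, dotR_neg_right, dotR_comm]
      ring
    · refine shear_integrable 0 C _ ?_ (fun w q => ?_)
      · simp only [Function.uncurry_def]
        fun_prop
      · simp only [Function.uncurry]
        rw [norm_mul, norm_mul, ee_norm, ee_norm, one_mul, one_mul]
        simpa using hb w q
  have inv2 := inversion h hh G hGc hGi ?_ ξ
  · simp_rw [hGF] at inv2
    have e3 : ∫ v : Fin n → ℝ, ee h (dotR v ξ) * (D * KK h a (y - s • v) (-v))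
        = D * ∫ v : Fin n → ℝ, ee h (-(dotR ξ v)) * KK h a (y + s • v) v := by
      rw [← integral_neg_eq_self, ← integral_const_mul]
      congr 1; ext v
      rw [dotR_neg_left, neg_neg, smul_neg, sub_neg_eq_add, dotR_comm]
      ring
    rw [e3] at inv2
    exact mul_left_cancel₀ hD inv2
  · simp_rw [hGF]
    refine Integrable.const_mul ?_ D
    refine (wt_integrable.const_mul C').mono'
      (Continuous.aestronglyMeasurable (by fun_prop)) (Filter.Eventually.of_forall fun v => ?_)
    have := hb' (y - s • v) (-v)
    rwa [wt_neg] at this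

lemma psi_bound {n : ℕ} (ψ : SchwartzMap (Fin n → ℝ) ℂ) :
    ∃ C : ℝ, 0 ≤ C ∧ ∀ y, ‖ψ y‖ ≤ C * wt y := by
  refine ⟨2 ^ (n + 1) * (Finset.Iic (n + 1, 0)).sup
    (fun m => SchwartzMap.seminorm ℝ m.1 m.2) ψ, by positivity, fun y => ?_⟩
  have h1 := SchwartzMap.one_add_le_sup_seminorm_apply (𝕜 := ℝ) (m := (n + 1, 0))
    (le_refl _) (le_refl _) ψ y
  simp only [norm_iteratedFDeriv_zero] at h1
  refine le_trans (le_of_eq ?_) (mul_le_mul_of_nonneg_right h1 (wt_pos y).le)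
  unfold wt; field_simp

lemma kernel_bound {n : ℕ} (h : ℝ) (hh : 0 < h) (hn : 1 ≤ n)
    (a : SchwartzMap ((Fin n → ℝ) × (Fin n → ℝ)) ℂ) (ψ : SchwartzMap (Fin n → ℝ) ℂ) :
    ∃ C : ℝ, 0 ≤ C ∧ ∀ u x y, ‖KK h a u (x - y) * ψ y‖ ≤ C * (wt y * wt (x - (1 : ℝ) • y)) := by
  obtain ⟨C, hC, hb⟩ := KK_bound h hh hn a
  obtain ⟨C', hC', hb'⟩ := psi_bound ψ
  refine ⟨C * C', by positivity, fun u x y => ?_⟩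
  rw [norm_mul, one_smul]
  have := (wt_pos (x - y)).le
  calc _ ≤ (C * wt (x - y)) * (C' * wt y) :=
        mul_le_mul (hb _ _) (hb' _) (norm_nonneg _) (by positivity)
    _ = _ := by ring

lemma lhs_tau {n : ℕ} (h : ℝ) (hh : 0 < h) (hn : 1 ≤ n)
    (a : SchwartzMap ((Fin n → ℝ) × (Fin n → ℝ)) ℂ) (ψ : SchwartzMap (Fin n → ℝ) ℂ)
    (ξ : Fin n → ℝ) (τ : ℝ) :
    ∫ x : Fin n → ℝ, ee h (-(dotR ξ x)) * ∫ y : Fin n → ℝ,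
        KK h a (τ • x + (1 - τ) • y) (x - y) * ψ y
      = ∫ y : Fin n → ℝ, (ee h (-(dotR ξ y)) * ψ y) *
          ∫ w : Fin n → ℝ, ee h (dotR w y) * PF h a w (ξ - τ • w) := by
  obtain ⟨C, hC, hb⟩ := kernel_bound h hh hn a ψ
  simp_rw [← integral_const_mul (μ := (volume : Measure (Fin n → ℝ))) (ee h (-(dotR ξ _)))]
  have hJ : Integrable (fun z : (Fin n → ℝ) × (Fin n → ℝ) => ee h (-(dotR ξ z.2)) *
      (KK h a (τ • z.2 + (1 - τ) • z.1) (z.2 - z.1) * ψ z.1)) (volume.prod volume) := by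
    refine shear_integrable 1 C _ (by fun_prop) (fun y x => ?_)
    rw [norm_mul, ee_norm, one_mul]
    exact hb _ _ _
  rw [integral_integral_swap (f := fun x y => ee h (-(dotR ξ x)) *
      (KK h a (τ • x + (1 - τ) • y) (x - y) * ψ y)) hJ.swap]
  congr 1; ext y
  rw [← key h hh hn, ← integral_const_mul,
    ← integral_add_right_eq_self (fun x => ee h (-(dotR ξ x)) *
      (KK h a (τ • x + (1 - τ) • y) (x - y) * ψ y)) y]
  congr 1; ext v
  have e1 : τ • (v + y) + (1 - τ) • y = y + τ • v := by module
  rw [e1, add_sub_cancel_right, dotR_add_right, neg_add, ee_add]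
  ring

lemma rhs_tau {n : ℕ} (h : ℝ) (hh : 0 < h) (hn : 1 ≤ n)
    (a : SchwartzMap ((Fin n → ℝ) × (Fin n → ℝ)) ℂ) (ψ : SchwartzMap (Fin n → ℝ) ℂ)
    (ξ : Fin n → ℝ) (τ : ℝ) :
    ∫ η : Fin n → ℝ, PF h a (ξ - η) ((1 - τ) • ξ + τ • η) *
        ∫ y : Fin n → ℝ, ee h (-(dotR η y)) * ψ y
      = ∫ y : Fin n → ℝ, (ee h (-(dotR ξ y)) * ψ y) *
          ∫ w : Fin n → ℝ, ee h (dotR w y) * PF h a w (ξ - τ • w) := by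
  obtain ⟨C, hC, hb⟩ := PF_bound h hh hn a
  obtain ⟨C', hC', hb'⟩ := psi_bound ψ
  rw [← integral_sub_left_eq_self _ volume ξ]
  have e0 : ∀ w : Fin n → ℝ, PF h a (ξ - (ξ - w)) ((1 - τ) • ξ + τ • (ξ - w)) *
        ∫ y : Fin n → ℝ, ee h (-(dotR (ξ - w) y)) * ψ y
      = ∫ y : Fin n → ℝ, (ee h (-(dotR ξ y)) * ψ y) *
          (ee h (dotR w y) * PF h a w (ξ - τ • w)) := by
    intro w
    have e1 : (1 - τ) • ξ + τ • (ξ - w) = ξ - τ • w := by module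
    rw [e1, sub_sub_cancel, ← integral_const_mul]
    congr 1; ext y
    rw [dotR_sub_left, neg_sub, sub_eq_add_neg (dotR w y), ee_add]
    ring
  simp_rw [e0]
  rw [integral_integral_swap]
  · congr 1; ext y
    rw [integral_const_mul]
  · refine shear_integrable 0 (C * C') _ ?_ (fun w y => ?_)
    · simp only [Function.uncurry_def]
      fun_prop
    · simp only [Function.uncurry]
      rw [norm_mul, norm_mul, norm_mul, ee_norm, ee_norm, one_mul, one_mul]
      have h1 := hb w (ξ - τ • w)
      have h2 : ‖PF h a w (ξ - τ • w)‖ ≤ C * wt w := by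
        refine h1.trans ?_
        have := wt_le_one (ξ - τ • w)
        have := wt_pos w
        gcongr
        nlinarith
      have := (wt_pos w).le
      have := (wt_pos y).le
      calc _ ≤ (C' * wt y) * (C * wt w) := mul_le_mul (hb' y) h2 (norm_nonneg _) (by positivity)
        _ = _ := by rw [zero_smul, sub_zero]; ring

lemma shubin_eq {n : ℕ} (h : ℝ) (a : SchwartzMap ((Fin n → ℝ) × (Fin n → ℝ)) ℂ)
    (φ : (Fin n → ℝ) → ℂ) (x : Fin n → ℝ) (τ : ℝ) :
    ShubinOp h τ a φ x = ((((2 * π * h) ^ n : ℝ))⁻¹ : ℂ) *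
      ∫ y : Fin n → ℝ, KK h a (τ • x + (1 - τ) • y) (x - y) * φ y := rfl

lemma shubin_eq' {n : ℕ} (h : ℝ) (a : SchwartzMap ((Fin n → ℝ) × (Fin n → ℝ)) ℂ)
    (φ : (Fin n → ℝ) → ℂ) (x : Fin n → ℝ) (τ : ℝ) :
    ShubinOp h τ (fun z => a (-z.2, z.1)) φ x = ((((2 * π * h) ^ n : ℝ))⁻¹ : ℂ) *
      ∫ y : Fin n → ℝ, PF h a (x - y) (τ • x + (1 - τ) • y) * φ y := by
  unfold ShubinOp
  congr 2; ext y
  congr 1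
  unfold PF
  rw [← integral_neg_eq_self]
  congr 1; ext p
  simp only [neg_neg]
  rw [dotR_neg_left, dotR_comm]
  rfl

lemma fourier_eq_ee {n : ℕ} (h : ℝ) (φ : (Fin n → ℝ) → ℂ) (p : Fin n → ℝ) :
    FourierHbar h φ p = ((Real.sqrt ((2 * π * h) ^ n))⁻¹ : ℂ) *
      ∫ x : Fin n → ℝ, ee h (-(dotR p x)) * φ x := by
  unfold FourierHbar
  simp_rw [ee_neg]

lemma tau_swap {n : ℕ} (h : ℝ) (hh : 0 < h) (hn : 1 ≤ n)
    (a : SchwartzMap ((Fin n → ℝ) × (Fin n → ℝ)) ℂ) (ψ : SchwartzMap (Fin n → ℝ) ℂ)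
    (ξ : Fin n → ℝ) :
    ∫ x : Fin n → ℝ, ee h (-(dotR ξ x)) * ∫ τ in (0:ℝ)..1, ∫ y : Fin n → ℝ,
        KK h a (τ • x + (1 - τ) • y) (x - y) * ψ y
      = ∫ τ in (0:ℝ)..1, ∫ x : Fin n → ℝ, ee h (-(dotR ξ x)) * ∫ y : Fin n → ℝ,
        KK h a (τ • x + (1 - τ) • y) (x - y) * ψ y := by
  obtain ⟨C, hC, hb⟩ := kernel_bound h hh hn a ψ
  simp_rw [intervalIntegral.integral_of_le zero_le_one,
    ← integral_const_mul (μ := (volume : Measure ℝ).restrict (Set.Ioc (0:ℝ) 1))]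
  have hcont : Continuous (fun z : (Fin n → ℝ) × ℝ => ∫ y : Fin n → ℝ,
      KK h a (z.2 • z.1 + (1 - z.2) • y) (z.1 - y) * ψ y) := by
    refine continuous_of_dominated (bound := fun y => C * wt y) (fun z => ?_) (fun z => ?_)
      (wt_integrable.const_mul C) (Filter.Eventually.of_forall fun y => ?_)
    · exact Continuous.aestronglyMeasurable (by fun_prop)
    · refine Filter.Eventually.of_forall fun y => (hb _ _ _).trans ?_
      have := wt_le_one (z.1 - (1 : ℝ) • y)
      have := wt_pos y
      gcongr
      nlinarith
    · fun_prop
  have hmaj : Integrable (fun x : Fin n → ℝ => ∫ y : Fin n → ℝ,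
      C * (wt y * wt (x - (1 : ℝ) • y))) :=
    ((shear_wt_integrable (n := n) 1).const_mul C).integral_prod_right
  have hall : ∀ x : Fin n → ℝ, Integrable (fun y : Fin n → ℝ =>
      C * (wt y * wt (x - (1 : ℝ) • y))) := by
    intro x
    refine (wt_integrable.const_mul C).mono' (Continuous.aestronglyMeasurable (by fun_prop))
      (Filter.Eventually.of_forall fun y => ?_)
    have h1 := wt_le_one (x - (1 : ℝ) • y)
    have h2 := wt_pos y
    have h3 := wt_pos (x - (1 : ℝ) • y)
    rw [Real.norm_of_nonneg (by positivity)]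
    gcongr
    nlinarith
  refine integral_integral_swap (μ := volume) (ν := volume.restrict (Set.Ioc (0:ℝ) 1)) (f := fun (x : Fin n → ℝ) (τ : ℝ) =>
    ee h (-(dotR ξ x)) * ∫ y : Fin n → ℝ, KK h a (τ • x + (1 - τ) • y) (x - y) * ψ y) ?_
  refine (hmaj.comp_fst (volume.restrict (Set.Ioc (0:ℝ) 1))).mono' ?_
    (Filter.Eventually.of_forall fun z => ?_)
  · exact Continuous.aestronglyMeasurable
      (Continuous.mul (by fun_prop) hcont)
  · simp only [Function.uncurry]
    rw [norm_mul, ee_norm, one_mul]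
    exact norm_integral_le_of_norm_le (hall z.1) (Filter.Eventually.of_forall fun y => hb _ _ _)

/-- Symplectic covariance of Born–Jordan quantization under the metaplectic
Fourier transform: `F Op_BJ(a) F⁻¹ = Op_BJ(a ∘ J⁻¹)` with `J(x,p) = (p,−x)`, i.e.
`F(A_BJ ψ) = B_BJ(Fψ)` where `B_BJ` has symbol `b(x,p) = a(−p, x)`. -/
theorem bjOp_fourier_covariance (hbar : ℝ) (hh : 0 < hbar) (n : ℕ) (hn : 1 ≤ n)
    (a : SchwartzMap ((Fin n → ℝ) × (Fin n → ℝ)) ℂ)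
    (ψ : SchwartzMap (Fin n → ℝ) ℂ) (x : Fin n → ℝ) :
    FourierHbar hbar (BJOp hbar (⇑a) (⇑ψ)) x =
      BJOp hbar (fun z => a (-z.2, z.1)) (FourierHbar hbar (⇑ψ)) x := by
  have hR : BJOp hbar (fun z => a (-z.2, z.1)) (FourierHbar hbar (⇑ψ)) x
      = ∫ τ in (0:ℝ)..1, ShubinOp hbar (1 - τ) (fun z => a (-z.2, z.1))
          (FourierHbar hbar (⇑ψ)) x := by
    unfold BJOp
    rw [intervalIntegral.integral_comp_sub_left
      (fun τ => ShubinOp hbar τ (fun z => a (-z.2, z.1)) (FourierHbar hbar (⇑ψ)) x) 1]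
    simp
  rw [hR, fourier_eq_ee]
  unfold BJOp
  simp_rw [shubin_eq, shubin_eq', fourier_eq_ee, intervalIntegral.integral_const_mul,
    mul_left_comm _ (((((2 * π * hbar) ^ n : ℝ))⁻¹ : ℂ)) _, integral_const_mul]
  rw [tau_swap hbar hh hn]
  simp_rw [lhs_tau hbar hh hn, mul_left_comm _ ((Real.sqrt ((2 * π * hbar) ^ n))⁻¹ : ℂ) _,
    integral_const_mul, sub_sub_cancel, rhs_tau hbar hh hn, intervalIntegral.integral_const_mul]
  ring

end
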